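/- For any two unit vectors x, y in R^n and a fixed unit vector e, if f(v) = 1 when e·v ≥ 0 and f(v) = -1 otherwise, then the average over the orthogonal group O(n) (with normalized Haar measure μ) of f(Tx)·f(Ty) equals (2/π)·arcsin(x·y) (Grothendieck's identity). -/

import Mathlib

open MeasureTheory Real
open scoped RealInnerProductSpace Matrix

noncomputable instance (n : ℕ) :
    MeasurableSpace (Matrix.orthogonalGroup (Fin n) ℝ) := borel _

instance (n : ℕ) : BorelSpace (Matrix.orthogonalGroup (Fin n) ℝ) := ⟨rfl⟩

/-!
By left invariance of `μ` and transitivity of the orthogonal group on spheres, the average over `T`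
of the product of the signs of `⟪v, T x⟫` and `⟪v, T y⟫` is the same for every `v ≠ 0`. It may
therefore be averaged over a standard Gaussian `v`; exchanging the integrals leaves, for each `T`,
the Gaussian mean of the product of the signs of `⟪v, T x⟫` and `⟪v, T y⟫`. The joint law of these
two variables depends only on the Gram matrix of `x` and `y`, so, with `θ` the angle between `x`
and `y`, they may be replaced by `‖x‖ exp (i t)` and `‖y‖ exp (i (t + θ))` in the complex plane,
for any `t`. Averaging over `t` turns the mean into that of the product of the signs of `cos t`
and `cos (t + θ)` over a period, which is `1 - 2 θ / π = (2 / π) arcsin (cos θ)`.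
-/

open InnerProductGeometry ProbabilityTheory

theorem measureReal_univ_smul_eq_of_ae_integral_eq {α β V : Type*} [MeasurableSpace α]
    [MeasurableSpace β] [NormedAddCommGroup V] [NormedSpace ℝ V] [CompleteSpace V]
    {μ : Measure α} {ν : Measure β} [SFinite μ] [SFinite ν] {F : α → β → V}
    (hF : Integrable (Function.uncurry F) (μ.prod ν)) {c d : V}
    (hc : ∀ᵐ a ∂μ, ∫ b, F a b ∂ν = c) (hd : ∀ᵐ b ∂ν, ∫ a, F a b ∂μ = d) :
    μ.real Set.univ • c = ν.real Set.univ • d := by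
  simpa only [integral_congr_ae hc, integral_congr_ae hd, integral_const]
    using integral_integral_swap hF

/-- The sign of a real number with the convention that `0` has sign `1`, whereas
`SignType.sign 0 = 0`. -/
noncomputable def stepSign (r : ℝ) : ℝ := if 0 ≤ r then 1 else -1

theorem stepSign_of_nonneg {r : ℝ} (hr : 0 ≤ r) : stepSign r = 1 := if_pos hr

theorem stepSign_of_neg {r : ℝ} (hr : r < 0) : stepSign r = -1 := if_neg hr.not_ge

theorem stepSign_mul_of_pos {c : ℝ} (hc : 0 < c) (r : ℝ) : stepSign (c * r) = stepSign r := by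
  simp only [stepSign, mul_nonneg_iff_of_pos_left hc]

theorem norm_stepSign (r : ℝ) : ‖stepSign r‖ = 1 := by
  unfold stepSign
  split_ifs <;> simp

theorem measurable_stepSign : Measurable stepSign :=
  Measurable.ite measurableSet_Ici measurable_const measurable_const

theorem integrable_stepSign_mul_stepSign {α : Type*} [MeasurableSpace α] {μ : Measure α}
    [IsFiniteMeasure μ] {f g : α → ℝ} (hf : Measurable f) (hg : Measurable g) :
    Integrable (fun a => stepSign (f a) * stepSign (g a)) μ :=
  .of_bound ((measurable_stepSign.comp hf).mul (measurable_stepSign.comp hg)).aestronglyMeasurable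
    1 (.of_forall fun a => by rw [norm_mul, norm_stepSign, norm_stepSign, one_mul])

theorem stepSign_cos_of_mem_Ioo {t : ℝ} (ht : t ∈ Set.Ioo (-(π / 2)) (π / 2)) :
    stepSign (cos t) = 1 :=
  stepSign_of_nonneg (cos_pos_of_mem_Ioo ht).le

theorem stepSign_cos_of_mem_Ioo_pi {t : ℝ} (ht : t ∈ Set.Ioo (π / 2) (π + π / 2)) :
    stepSign (cos t) = -1 :=
  stepSign_of_neg (cos_neg_of_pi_div_two_lt_of_lt ht.1 ht.2)

theorem stepSign_cos_of_mem_Ioo_two_pi {t : ℝ}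
    (ht : t ∈ Set.Ioo (π + π / 2) (2 * π + π / 2)) : stepSign (cos t) = 1 := by
  rw [← cos_sub_two_pi]
  exact stepSign_cos_of_mem_Ioo ⟨by linarith [ht.1], by linarith [ht.2]⟩

theorem intervalIntegral_eq_of_forall_mem_Ioo {V : Type*} [NormedAddCommGroup V]
    [NormedSpace ℝ V] [CompleteSpace V] {g : ℝ → V} {a b : ℝ} {c : V} (hab : a ≤ b)
    (h : ∀ t ∈ Set.Ioo a b, g t = c) : ∫ t in a..b, g t = (b - a) • c := by
  rw [intervalIntegral.integral_congr_Ioo_of_le hab h, intervalIntegral.integral_const]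

theorem integral_stepSign_cos_mul_stepSign_cos_add {θ : ℝ} (h0 : 0 ≤ θ) (hπ : θ ≤ π) :
    ∫ t in (-(π / 2))..(-(π / 2) + 2 * π), stepSign (cos t) * stepSign (cos (t + θ)) =
      2 * π - 4 * θ := by
  have : 0 < π := pi_pos
  let g (t : ℝ) : ℝ := stepSign (cos t) * stepSign (cos (t + θ))
  have hint (a b : ℝ) : IntervalIntegrable g volume a b :=
    ⟨integrable_stepSign_mul_stepSign (by fun_prop) (by fun_prop),
      integrable_stepSign_mul_stepSign (by fun_prop) (by fun_prop)⟩
  have hg {t a b : ℝ} (ha : stepSign (cos t) = a) (hb : stepSign (cos (t + θ)) = b) :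
      g t = a * b := congrArg₂ (· * ·) ha hb
  have h₁ : ∫ t in (-(π / 2))..(π / 2 - θ), g t = (π / 2 - θ - -(π / 2)) * (1 * 1) :=
    intervalIntegral_eq_of_forall_mem_Ioo (by linarith) fun t ⟨hl, hr⟩ =>
      hg (stepSign_cos_of_mem_Ioo ⟨hl, by linarith⟩)
        (stepSign_cos_of_mem_Ioo ⟨by linarith, by linarith⟩)
  have h₂ : ∫ t in (π / 2 - θ)..(π / 2), g t = (π / 2 - (π / 2 - θ)) * (1 * -1) :=
    intervalIntegral_eq_of_forall_mem_Ioo (by linarith) fun t ⟨hl, hr⟩ =>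
      hg (stepSign_cos_of_mem_Ioo ⟨by linarith, hr⟩)
        (stepSign_cos_of_mem_Ioo_pi ⟨by linarith, by linarith⟩)
  have h₃ : ∫ t in (π / 2)..(π + π / 2 - θ), g t = (π + π / 2 - θ - π / 2) * (-1 * -1) :=
    intervalIntegral_eq_of_forall_mem_Ioo (by linarith) fun t ⟨hl, hr⟩ =>
      hg (stepSign_cos_of_mem_Ioo_pi ⟨hl, by linarith⟩)
        (stepSign_cos_of_mem_Ioo_pi ⟨by linarith, by linarith⟩)
  have h₄ : ∫ t in (π + π / 2 - θ)..(-(π / 2) + 2 * π), g t =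
      (-(π / 2) + 2 * π - (π + π / 2 - θ)) * (-1 * 1) :=
    intervalIntegral_eq_of_forall_mem_Ioo (by linarith) fun t ⟨hl, hr⟩ =>
      hg (stepSign_cos_of_mem_Ioo_pi ⟨by linarith, by linarith⟩)
        (stepSign_cos_of_mem_Ioo_two_pi ⟨by linarith, by linarith⟩)
  change ∫ t in (-(π / 2))..(-(π / 2) + 2 * π), g t = _
  rw [← intervalIntegral.integral_add_adjacent_intervals (hint _ (π / 2 - θ)) (hint _ _),
    ← intervalIntegral.integral_add_adjacent_intervals (hint (π / 2 - θ) (π / 2)) (hint _ _),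
    ← intervalIntegral.integral_add_adjacent_intervals (hint (π / 2) (π + π / 2 - θ)) (hint _ _),
    h₁, h₂, h₃, h₄]
  ring

theorem integral_stepSign_cos_sub_mul_stepSign_cos_add_sub {θ : ℝ} (h0 : 0 ≤ θ) (hπ : θ ≤ π)
    (φ : ℝ) :
    ∫ t in 0..2 * π, stepSign (cos (t - φ)) * stepSign (cos (t + θ - φ)) = 2 * π - 4 * θ := by
  have hper : Function.Periodic (fun t => stepSign (cos t) * stepSign (cos (t + θ))) (2 * π) :=
    fun t => by simp only [cos_add_two_pi, add_right_comm t (2 * π) θ]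
  calc ∫ t in 0..2 * π, stepSign (cos (t - φ)) * stepSign (cos (t + θ - φ))
    _ = ∫ t in (0 - φ)..(2 * π - φ), stepSign (cos t) * stepSign (cos (t + θ)) := by
      simp only [add_sub_right_comm,
        ← intervalIntegral.integral_comp_sub_right
          (fun t => stepSign (cos t) * stepSign (cos (t + θ)))]
    _ = ∫ t in (0 - φ)..(0 - φ + 2 * π), stepSign (cos t) * stepSign (cos (t + θ)) := by
      congr 1; ring
    _ = 2 * π - 4 * θ := by
      rw [hper.intervalIntegral_add_eq _ (-(π / 2)),
        integral_stepSign_cos_mul_stepSign_cos_add h0 hπ]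

theorem real_inner_ofReal_mul_exp_ofReal_mul_exp (r R s t : ℝ) :
    ⟪(r : ℂ) * Complex.exp (s * Complex.I), (R : ℂ) * Complex.exp (t * Complex.I)⟫ =
      r * R * cos (s - t) := by
  simp only [Complex.inner, cos_sub, map_mul, Complex.conj_ofReal, Complex.mul_re, Complex.mul_im,
    Complex.conj_re, Complex.conj_im, Complex.exp_ofReal_mul_I_re, Complex.exp_ofReal_mul_I_im,
    Complex.ofReal_re, Complex.ofReal_im]
  ring

theorem real_inner_ofReal_mul_exp (r t : ℝ) (v : ℂ) :
    ⟪(r : ℂ) * Complex.exp (t * Complex.I), v⟫ = r * (‖v‖ * cos (t - v.arg)) := by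
  nth_rw 1 [← Complex.norm_mul_exp_arg_mul_I v]
  rw [real_inner_ofReal_mul_exp_ofReal_mul_exp, mul_assoc]

section StdGaussian

variable {E F : Type*}
  [NormedAddCommGroup E] [InnerProductSpace ℝ E] [FiniteDimensional ℝ E]
  [MeasurableSpace E] [BorelSpace E]
  [NormedAddCommGroup F] [InnerProductSpace ℝ F] [FiniteDimensional ℝ F]
  [MeasurableSpace F] [BorelSpace F]

theorem charFunDual_map_inner_prodMk_inner_stdGaussian (x y : E) (L : StrongDual ℝ (ℝ × ℝ)) :
    charFunDual ((stdGaussian E).map fun v => (⟪x, v⟫, ⟪y, v⟫)) L =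
      Complex.exp (-(((L (1, 0) * ‖x‖) ^ 2 + 2 * (L (1, 0) * L (0, 1) * ⟪x, y⟫) +
        (L (0, 1) * ‖y‖) ^ 2 : ℝ) : ℂ) / 2) := by
  have hL : L.comp ((innerSL ℝ x).prod (innerSL ℝ y)) =
      innerSL ℝ (L (1, 0) • x + L (0, 1) • y) := by
    ext v
    have hv : (⟪x, v⟫, ⟪y, v⟫) = ⟪x, v⟫ • ((1, 0) : ℝ × ℝ) + ⟪y, v⟫ • ((0, 1) : ℝ × ℝ) := by
      simp
    simp only [ContinuousLinearMap.comp_apply, ContinuousLinearMap.prod_apply,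
      innerSL_apply_apply, inner_add_left, real_inner_smul_left]
    rw [hv, map_add, map_smul, map_smul, smul_eq_mul, smul_eq_mul, mul_comm, mul_comm ⟪y, v⟫]
  change charFunDual ((stdGaussian E).map ((innerSL ℝ x).prod (innerSL ℝ y))) L = _
  rw [charFunDual_map, hL, charFunDual_stdGaussian, innerSL_apply_norm, ← Complex.ofReal_pow,
    norm_add_sq_real, norm_smul, norm_smul, real_inner_smul_left, real_inner_smul_right,
    mul_pow, mul_pow, mul_pow, mul_pow, norm_eq_abs, norm_eq_abs, sq_abs, sq_abs, mul_assoc]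

theorem map_inner_prodMk_inner_stdGaussian_eq {x y : E} {x' y' : F} (hx : ‖x‖ = ‖x'‖)
    (hy : ‖y‖ = ‖y'‖) (hxy : ⟪x, y⟫ = ⟪x', y'⟫) :
    (stdGaussian E).map (fun v => (⟪x, v⟫, ⟪y, v⟫)) =
      (stdGaussian F).map (fun v => (⟪x', v⟫, ⟪y', v⟫)) :=
  Measure.ext_of_charFunDual <| funext fun L => by
    simp only [charFunDual_map_inner_prodMk_inner_stdGaussian, hx, hy, hxy]

theorem integral_comp_inner_prodMk_inner_stdGaussian_eq {V : Type*} [NormedAddCommGroup V]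
    [NormedSpace ℝ V] {x y : E} {x' y' : F} (hx : ‖x‖ = ‖x'‖) (hy : ‖y‖ = ‖y'‖)
    (hxy : ⟪x, y⟫ = ⟪x', y'⟫) {φ : ℝ × ℝ → V} (hφ : StronglyMeasurable φ) :
    ∫ v, φ (⟪x, v⟫, ⟪y, v⟫) ∂stdGaussian E = ∫ v, φ (⟪x', v⟫, ⟪y', v⟫) ∂stdGaussian F := by
  rw [← integral_map (by fun_prop) hφ.aestronglyMeasurable,
    map_inner_prodMk_inner_stdGaussian_eq hx hy hxy,
    integral_map (by fun_prop) hφ.aestronglyMeasurable]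

instance nullSingletonClass_stdGaussian [Nontrivial E] : NullSingletonClass (stdGaussian E) where
  measure_singleton v := by
    obtain ⟨x, hx⟩ := exists_ne (0 : E)
    have : NullSingletonClass ((stdGaussian E).map (innerSL ℝ x)) := by
      rw [IsGaussian.map_eq_gaussianReal, variance_dual_stdGaussian, innerSL_apply_norm]
      exact nullSingletonClass_gaussianReal (by simpa using hx)
    refine measure_mono_null (Set.singleton_subset_iff.2 (Set.mem_singleton _)) ?_
      (t := innerSL ℝ x ⁻¹' {innerSL ℝ x v})
    rw [← Measure.map_apply (by fun_prop) (measurableSet_singleton _), measure_singleton]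

theorem integral_stepSign_inner_mul_stepSign_inner_stdGaussian {x y : E} (hx : x ≠ 0)
    (hy : y ≠ 0) :
    ∫ v, stepSign ⟪x, v⟫ * stepSign ⟪y, v⟫ ∂stdGaussian E =
      2 / π * arcsin (⟪x, y⟫ / (‖x‖ * ‖y‖)) := by
  set θ := angle x y with hθ
  let z (r t : ℝ) : ℂ := r * Complex.exp (t * Complex.I)
  have norm_z (v : E) (t : ℝ) : ‖z ‖v‖ t‖ = ‖v‖ := by simp [z, Complex.norm_exp_ofReal_mul_I]
  have inner_z (t : ℝ) : ⟪z ‖x‖ t, z ‖y‖ (t + θ)⟫ = ⟪x, y⟫ := by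
    rw [real_inner_ofReal_mul_exp_ofReal_mul_exp, sub_add_cancel_left, cos_neg, mul_comm,
      cos_angle_mul_norm_mul_norm]
  have hlaw (t : ℝ) : ∫ v, stepSign ⟪z ‖x‖ t, v⟫ * stepSign ⟪z ‖y‖ (t + θ), v⟫ ∂stdGaussian ℂ =
      ∫ v, stepSign ⟪x, v⟫ * stepSign ⟪y, v⟫ ∂stdGaussian E :=
    integral_comp_inner_prodMk_inner_stdGaussian_eq (norm_z _ _) (norm_z _ _) (inner_z t)
      ((measurable_stepSign.comp measurable_fst).mul
        (measurable_stepSign.comp measurable_snd)).stronglyMeasurable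
  have hcircle (v : ℂ) (hv : v ≠ 0) :
      ∫ t in Set.Ioc 0 (2 * π), stepSign ⟪z ‖x‖ t, v⟫ * stepSign ⟪z ‖y‖ (t + θ), v⟫ =
        2 * π - 4 * θ := by
    rw [← integral_stepSign_cos_sub_mul_stepSign_cos_add_sub (angle_nonneg x y)
      (angle_le_pi x y) v.arg, intervalIntegral.integral_of_le two_pi_pos.le]
    simp only [z, real_inner_ofReal_mul_exp, stepSign_mul_of_pos (norm_pos_iff.2 hx),
      stepSign_mul_of_pos (norm_pos_iff.2 hy), stepSign_mul_of_pos (norm_pos_iff.2 hv), ← hθ]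
  have hswap := measureReal_univ_smul_eq_of_ae_integral_eq
    (integrable_stepSign_mul_stepSign (μ := (volume.restrict (Set.Ioc 0 (2 * π))).prod
      (stdGaussian ℂ)) (f := fun p => ⟪z ‖x‖ p.1, p.2⟫)
      (g := fun p => ⟪z ‖y‖ (p.1 + θ), p.2⟫) (by fun_prop) (by fun_prop))
    (.of_forall hlaw) ((stdGaussian ℂ).ae_ne 0 |>.mono hcircle)
  simp only [measureReal_restrict_apply_univ, volume_real_Ioc_of_le two_pi_pos.le, sub_zero,
    probReal_univ, smul_eq_mul, one_mul] at hswap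
  rw [arcsin_eq_pi_div_two_sub_arccos, ← angle, ← hθ]
  field_simp
  linarith

end StdGaussian

/-- The isomorphism of the orthogonal matrix group with the linear isometry group of Euclidean space
given by matrix-vector multiplication, through which the matrix group acts by isometries. -/
noncomputable def orthogonalGroupEquivLinearIsometryEquiv (ι : Type*) [Fintype ι]
    [DecidableEq ι] :
    Matrix.orthogonalGroup ι ℝ ≃* (EuclideanSpace ℝ ι ≃ₗᵢ[ℝ] EuclideanSpace ℝ ι) :=
  (Unitary.mapEquiv { __ := Matrix.toEuclideanCLM (n := ι) (𝕜 := ℝ) }).toMulEquiv.trans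
    Unitary.linearIsometryEquiv

theorem orthogonalGroupEquivLinearIsometryEquiv_apply {ι : Type*} [Fintype ι] [DecidableEq ι]
    (T : Matrix.orthogonalGroup ι ℝ) (v : EuclideanSpace ℝ ι) :
    orthogonalGroupEquivLinearIsometryEquiv ι T v =
      WithLp.toLp 2 ((T : Matrix ι ι ℝ) *ᵥ v.ofLp) := rfl

theorem continuous_orthogonalGroupEquivLinearIsometryEquiv_apply {ι : Type*} [Fintype ι]
    [DecidableEq ι] (v : EuclideanSpace ℝ ι) :
    Continuous fun T => orthogonalGroupEquivLinearIsometryEquiv ι T v := by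
  simp only [orthogonalGroupEquivLinearIsometryEquiv_apply]
  fun_prop

theorem exists_orthogonalGroupEquivLinearIsometryEquiv_apply_eq {ι : Type*} [Fintype ι]
    [DecidableEq ι] {v w : EuclideanSpace ℝ ι} (h : ‖v‖ = ‖w‖) :
    ∃ T, orthogonalGroupEquivLinearIsometryEquiv ι T v = w := by
  obtain ⟨T, hT⟩ := (orthogonalGroupEquivLinearIsometryEquiv ι).surjective
    (ℝ ∙ (v - w))ᗮ.reflection
  exact ⟨T, by rw [hT, Submodule.reflection_sub h]⟩

theorem stmt_0_general {G E : Type*} [Group G] [MeasurableSpace G] [MeasurableMul G]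
    [NormedAddCommGroup E] [InnerProductSpace ℝ E] [FiniteDimensional ℝ E]
    [MeasurableSpace E] [BorelSpace E]
    (μ : Measure G) [IsProbabilityMeasure μ] [μ.IsMulLeftInvariant] (ρ : G →* (E ≃ₗᵢ[ℝ] E))
    (hρ_meas : ∀ v, Measurable fun g => ρ g v)
    (hρ_trans : ∀ v w, ‖v‖ = ‖w‖ → ∃ g, ρ g v = w)
    {e x y : E} (he : e ≠ 0) (hx : x ≠ 0) (hy : y ≠ 0) :
    ∫ g, stepSign ⟪e, ρ g x⟫ * stepSign ⟪e, ρ g y⟫ ∂μ =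
      2 / π * arcsin (⟪x, y⟫ / (‖x‖ * ‖y‖)) := by
  have : Nontrivial E := ⟨e, 0, he⟩
  have hsphere (v : E) (hv : v ≠ 0) :
      ∫ g, stepSign ⟪ρ g x, v⟫ * stepSign ⟪ρ g y, v⟫ ∂μ =
        ∫ g, stepSign ⟪e, ρ g x⟫ * stepSign ⟪e, ρ g y⟫ ∂μ := by
    have hc : 0 < ‖v‖ / ‖e‖ := div_pos (norm_pos_iff.2 hv) (norm_pos_iff.2 he)
    obtain ⟨h, h_apply⟩ := hρ_trans ((‖v‖ / ‖e‖) • e) v <| by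
      rw [norm_smul_of_nonneg hc.le, div_mul_cancel₀ _ (norm_ne_zero_iff.2 he)]
    have hinner (g : G) (w : E) : ⟪ρ (h * g) w, v⟫ = ‖v‖ / ‖e‖ * ⟪e, ρ g w⟫ := by
      rw [map_mul, LinearIsometryEquiv.coe_mul, Function.comp_apply, real_inner_comm (ρ g w) e,
        ← real_inner_smul_right, ← (ρ h).inner_map_map (ρ g w), h_apply]
    rw [← integral_mul_left_eq_self _ h]
    simp only [hinner, stepSign_mul_of_pos hc]
  have hgauss (g : G) : ∫ v, stepSign ⟪ρ g x, v⟫ * stepSign ⟪ρ g y, v⟫ ∂stdGaussian E =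
      2 / π * arcsin (⟪x, y⟫ / (‖x‖ * ‖y‖)) := by
    rw [integral_stepSign_inner_mul_stepSign_inner_stdGaussian (by simpa using hx)
      (by simpa using hy)]
    simp only [LinearIsometryEquiv.inner_map_map, LinearIsometryEquiv.norm_map]
  have hmeas (w : E) : Measurable fun p : E × G => ⟪ρ p.2 w, p.1⟫ :=
    ((hρ_meas w).comp measurable_snd).inner measurable_fst
  simpa using measureReal_univ_smul_eq_of_ae_integral_eq
    (integrable_stepSign_mul_stepSign (μ := (stdGaussian E).prod μ) (hmeas x) (hmeas y))
    (((stdGaussian E).ae_ne 0).mono hsphere) (.of_forall hgauss)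

theorem stmt_0 (n : ℕ) (hn : 2 ≤ n)
    (e : EuclideanSpace ℝ (Fin n)) (he : ‖e‖ = 1)
    (f : EuclideanSpace ℝ (Fin n) → ℝ)
    (hf : ∀ v : EuclideanSpace ℝ (Fin n), f v = if 0 ≤ ⟪e, v⟫ then 1 else -1)
    (μ : Measure (Matrix.orthogonalGroup (Fin n) ℝ))
    (hμprob : IsProbabilityMeasure μ)
    (hμinv : ∀ g : Matrix.orthogonalGroup (Fin n) ℝ,
      Measure.map (fun T => g * T) μ = μ)
    (x y : EuclideanSpace ℝ (Fin n)) (hx : ‖x‖ = 1) (hy : ‖y‖ = 1) :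
    ∫ T : Matrix.orthogonalGroup (Fin n) ℝ,
        f ((EuclideanSpace.equiv (Fin n) ℝ).symm
            ((T : Matrix (Fin n) (Fin n) ℝ) *ᵥ (EuclideanSpace.equiv (Fin n) ℝ x))) *
        f ((EuclideanSpace.equiv (Fin n) ℝ).symm
            ((T : Matrix (Fin n) (Fin n) ℝ) *ᵥ (EuclideanSpace.equiv (Fin n) ℝ y))) ∂μ
      = (2 / π) * Real.arcsin ⟪x, y⟫ := by
  have : μ.IsMulLeftInvariant := ⟨hμinv⟩
  obtain rfl : f = fun v => stepSign ⟪e, v⟫ := funext hf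
  have ne_zero {v : EuclideanSpace ℝ (Fin n)} (hv : ‖v‖ = 1) : v ≠ 0 := by
    rintro rfl
    simp at hv
  have identity := stmt_0_general μ
    (orthogonalGroupEquivLinearIsometryEquiv (Fin n)).toMonoidHom
    (fun v => (continuous_orthogonalGroupEquivLinearIsometryEquiv_apply v).measurable)
    (fun _ _ => exists_orthogonalGroupEquivLinearIsometryEquiv_apply_eq)
    (ne_zero he) (ne_zero hx) (ne_zero hy)
  rwa [hx, hy, mul_one, div_one] at identity
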